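/- (de la Harpe) Let k ≥ 2, let F_k be the free group on generators g₁, …, g_k, and let T be the bounded operator on ℓ²(F_k) defined by (Tf)(x) = Σ_{i=1}^{k} f(g_i x). Then the spectrum of T equals the closed disk {z ∈ ℂ : |z| ≤ √k}. -/

import Mathlib

/-!
Split `T = C + D`, where `C` keeps the edges `x → gᵢx` at which a letter cancels and `D` the others.
At a given vertex at most one edge of `C` leaves and at most one edge of `D` enters, so
`‖C‖, ‖D‖ ≤ √k` by Schur's test. After lengthening a word no further generator cancels, so
`DC = 0`; then `(z - D)(z - C) = z(z - T)`, which bounds the spectrum.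

Conversely, let `z - T` be invertible and `G = (z - T)⁻¹ δ₁`. Let `Bᵢ` be the set of words ending in
`gᵢ⁻¹`. The only edge joining `Bᵢ` to its complement is `gᵢ⁻¹ → 1`, so cutting a function down to
`Bᵢ` changes its image under `z - T` in one controlled point. By uniqueness the restriction of `G`
to `Bᵢ` is `x ↦ G(1) G(x gᵢ)`, and likewise `G(gᵢ) (1 + G(gᵢ)) = 0`. Together with the symmetry
under permutations of the generators this forces `z G(1) = 1`, and comparing `ℓ²` norms on the
disjoint sets `{1}, B₁, …, B_k` gives `k |G(1)|² < 1`, that is `k < |z|²`.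
-/

open Finset FreeGroup
open scoped lp

section Spectrum

theorem spectrum_add_diff_zero_subset_union {𝕜 A : Type*} [Field 𝕜] [Ring A] [Algebra 𝕜 A]
    {a b : A} (hba : b * a = 0) :
    spectrum 𝕜 (a + b) \ {0} ⊆ spectrum 𝕜 a ∪ spectrum 𝕜 b := by
  rintro z ⟨hz, hz0 : z ≠ 0⟩
  contrapose! hz
  simp only [Set.mem_union, not_or, spectrum.notMem_iff] at hz ⊢
  have hfactor : (algebraMap 𝕜 A z - b) * (algebraMap 𝕜 A z - a) =
      Units.mk0 z hz0 • (algebraMap 𝕜 A z - (a + b)) := by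
    rw [Units.smul_def, Units.val_mk0, Algebra.smul_def, sub_mul, mul_sub, mul_sub, hba,
      ← Algebra.commutes z b, mul_sub, mul_add]
    abel
  rw [← isUnit_smul_iff (Units.mk0 z hz0), ← hfactor]
  exact hz.2.mul hz.1

theorem norm_le_of_mem_spectrum_continuousLinearMap {𝕜 E : Type*} [NontriviallyNormedField 𝕜]
    [NormedAddCommGroup E] [NormedSpace 𝕜 E] [CompleteSpace E] {T : E →L[𝕜] E} {z : 𝕜}
    (hz : z ∈ spectrum 𝕜 T) : ‖z‖ ≤ ‖T‖ :=
  (spectrum.norm_le_norm_mul_of_mem hz).trans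
    (mul_le_of_le_one_right (norm_nonneg _) ContinuousLinearMap.norm_id_le)

end Spectrum

section SquareSummable

variable {V W E : Type*} [NormedAddCommGroup E]

theorem lp_two_hasSum_norm_sq (f : ℓ²(V, E)) :
    HasSum (fun x => ‖f x‖ ^ 2) (‖f‖ ^ 2) := by
  simpa using lp.hasSum_norm (p := 2) (by norm_num) f

theorem memℓp_comp_injective {p : ENNReal} (hp : 0 < p.toReal) {f : W → E} (hf : Memℓp f p)
    {φ : V → W} (hφ : Function.Injective φ) : Memℓp (fun x => f (φ x)) p :=
  memℓp_gen ((hf.summable hp).comp_injective hφ)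

theorem memℓp_indicator {p : ENNReal} {f : V → E} (hf : Memℓp f p) (S : Set V) :
    Memℓp (S.indicator f) p :=
  hf.mono' fun _ => norm_indicator_le_norm_self f _

end SquareSummable

section DigraphAdjacency

variable {V W 𝕜 : Type*} [NontriviallyNormedField 𝕜] (N : V → Finset W) {m n : ℕ}

theorem sum_norm_sq_sum_le (hout : ∀ x, #(N x) ≤ m)
    (hin : ∀ y, {x | y ∈ N x}.encard ≤ n) (f : ℓ²(W, 𝕜)) (s : Finset V) :
    ∑ x ∈ s, ‖∑ y ∈ N x, f y‖ ^ 2 ≤ m * n * ‖f‖ ^ 2 := by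
  classical
  have hrow (x : V) : ‖∑ y ∈ N x, f y‖ ^ 2 ≤ m * ∑ y ∈ N x, ‖f y‖ ^ 2 :=
    calc ‖∑ y ∈ N x, f y‖ ^ 2 ≤ (∑ y ∈ N x, ‖f y‖) ^ 2 := by gcongr; exact norm_sum_le _ _
      _ ≤ #(N x) * ∑ y ∈ N x, ‖f y‖ ^ 2 := sq_sum_le_card_mul_sum_sq
      _ ≤ m * ∑ y ∈ N x, ‖f y‖ ^ 2 := by gcongr; exact hout x
  have hcolumn (y : W) : #{x ∈ s | y ∈ N x} ≤ n := by
    have hsubset : (({x ∈ s | y ∈ N x} : Finset V) : Set V) ⊆ {x | y ∈ N x} := fun x hx =>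
      (mem_filter.1 hx).2
    exact_mod_cast (Set.encard_coe_eq_coe_finsetCard _).ge.trans
      ((Set.encard_le_encard hsubset).trans (hin y))
  calc ∑ x ∈ s, ‖∑ y ∈ N x, f y‖ ^ 2 ≤ ∑ x ∈ s, m * ∑ y ∈ N x, ‖f y‖ ^ 2 := by
        gcongr with x; exact hrow x
    _ = m * ∑ y ∈ s.biUnion N, #{x ∈ s | y ∈ N x} * ‖f y‖ ^ 2 := by
        rw [← mul_sum, sum_comm' (t' := s.biUnion N) (s' := fun y => {x ∈ s | y ∈ N x})
          (by intro x y; simp only [mem_filter, mem_biUnion]; tauto)]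
        simp only [sum_const, nsmul_eq_mul]
    _ ≤ m * ∑ y ∈ s.biUnion N, n * ‖f y‖ ^ 2 := by gcongr with y; exact hcolumn y
    _ = m * n * ∑ y ∈ s.biUnion N, ‖f y‖ ^ 2 := by rw [← mul_sum, mul_assoc]
    _ ≤ m * n * ‖f‖ ^ 2 := by
        gcongr
        exact sum_le_hasSum _ (fun _ _ => by positivity) (lp_two_hasSum_norm_sq f)

/-- The adjacency operator `(A f)(x) = ∑ f(y)` over the edges `x → y` of a digraph, on `ℓ²`. The
digraph is given by its finite out-neighbourhoods `N x`, and its out-degrees and in-degrees are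
bounded by `m` and `n`. -/
noncomputable def digraphAdjacency (hout : ∀ x, #(N x) ≤ m)
    (hin : ∀ y, {x | y ∈ N x}.encard ≤ n) :
    ℓ²(W, 𝕜) →L[𝕜] ℓ²(V, 𝕜) :=
  LinearMap.mkContinuous
    { toFun f := ⟨fun x => ∑ y ∈ N x, f y, memℓp_gen' (C := m * n * ‖f‖ ^ 2) fun s => by
        simpa using sum_norm_sq_sum_le N hout hin f s⟩
      map_add' f f' := Subtype.ext <| funext fun _ => sum_add_distrib
      map_smul' c f := by ext x; simp [mul_sum] }
    √(m * n) fun f => lp.norm_le_of_forall_sum_le (by norm_num) (by positivity) fun s => by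
      simpa [mul_pow, Real.sq_sqrt (by positivity : (0 : ℝ) ≤ m * n)] using
        sum_norm_sq_sum_le N hout hin f s

variable {N} (hout : ∀ x, #(N x) ≤ m) (hin : ∀ y, {x | y ∈ N x}.encard ≤ n)

theorem digraphAdjacency_apply (f : ℓ²(W, 𝕜)) (x : V) :
    digraphAdjacency N hout hin f x = ∑ y ∈ N x, f y := rfl

theorem norm_digraphAdjacency_le : ‖digraphAdjacency (𝕜 := 𝕜) N hout hin‖ ≤ √(m * n) :=
  LinearMap.mkContinuous_norm_le _ (Real.sqrt_nonneg _) _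

end DigraphAdjacency

section Words

variable {α : Type*} [DecidableEq α]

theorem eq_of_mem_startsWith {x : FreeGroup α} {v w : α × Bool} (hv : x ∈ startsWith v)
    (hw : x ∈ startsWith w) : v = w := by
  by_contra hvw
  exact Set.disjoint_left.1 (startsWith.disjoint_iff_ne.2 hvw) hv hw

/-- The reduced words ending in `gᵢ⁻¹`. In the Cayley tree with edges `x → gⱼx` this is the
component of `gᵢ⁻¹` after deletion of the edge `gᵢ⁻¹ → 1`. -/
def branch (i : α) : Set (FreeGroup α) := {x | x.toWord.getLast? = some (i, false)}

theorem one_notMem_branch (i : α) : (1 : FreeGroup α) ∉ branch i := by simp [branch]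

theorem of_inv_mem_branch (i : α) : (of i)⁻¹ ∈ branch i := by simp [branch, toWord_inv, invRev]

theorem disjoint_branch {i j : α} (hij : i ≠ j) : Disjoint (branch i) (branch j) :=
  Set.disjoint_left.2 fun _ hi hj => hij (by simpa using hi.symm.trans hj)

theorem mem_branch_iff_of_mul_mem (i j : α) (x : FreeGroup α) :
    x ∈ branch i ↔ of j * x ∈ branch i ∨ (j = i ∧ x = (of i)⁻¹) := by
  have hinv : x = (of i)⁻¹ ↔ x.toWord = [(i, false)] := by
    rw [← toWord_inj, toWord_inv, toWord_of]
    rfl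
  simp only [branch, Set.mem_ofPred_eq, hinv, toWord_mul, toWord_of, List.singleton_append,
    reduce.cons, reduce_toWord]
  rcases x.toWord with _ | ⟨⟨l, b⟩, _ | ⟨c, w⟩⟩ <;> grind

theorem indicator_branch_of_mul {M : Type*} [AddGroup M] (f : FreeGroup α → M) (i j : α)
    (x : FreeGroup α) :
    (branch i).indicator f (of j * x) =
      (branch i).indicator (fun y => f (of j * y)) x - if j = i ∧ x = (of i)⁻¹ then f 1 else 0 := by
  classical
  have hiff := mem_branch_iff_of_mul_mem i j x
  by_cases hcut : j = i ∧ x = (of i)⁻¹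
  · obtain ⟨rfl, rfl⟩ := hcut
    simp [Set.indicator, one_notMem_branch, of_inv_mem_branch]
  · simp only [hcut, or_false] at hiff
    simp [Set.indicator, hiff, hcut]

end Words

section Adjacency

variable {α : Type*}

/-- The endpoints of the edges `x → gᵢx` with `i ∈ S`. -/
def successors (S : Finset α) (x : FreeGroup α) : Finset (FreeGroup α) :=
  S.map ⟨fun i => of i * x, (mul_left_injective x).comp of_injective⟩

theorem mem_successors {S : Finset α} {x y : FreeGroup α} :
    y ∈ successors S x ↔ ∃ i ∈ S, of i * x = y := mem_map

theorem card_successors (S : Finset α) (x : FreeGroup α) : #(successors S x) = #S := card_map _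

variable [Fintype α]

theorem encard_setOf_mem_successors_le (S : FreeGroup α → Finset α) (y : FreeGroup α) :
    {x | y ∈ successors (S x) x}.encard ≤ Fintype.card α := by
  have hsubset : {x | y ∈ successors (S x) x} ⊆ Set.range fun i => (of i)⁻¹ * y := by
    intro x hx
    obtain ⟨i, -, rfl⟩ := mem_successors.1 hx
    exact ⟨i, inv_mul_cancel_left _ _⟩
  refine (Set.encard_le_encard hsubset).trans ?_
  rw [← Set.image_univ]
  refine (Set.encard_image_le _ _).trans ?_
  simp

variable [DecidableEq α]

open scoped Classical in
/-- The indices `i` (at most one) for which the product `gᵢx` cancels the first letter of `x`. -/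
noncomputable def cancelling (x : FreeGroup α) : Finset α := {i | x ∈ startsWith (i, false)}

theorem mem_cancelling {x : FreeGroup α} {i : α} :
    i ∈ cancelling x ↔ x ∈ startsWith (i, false) := by simp [cancelling]

theorem card_successors_cancelling_le_one (x : FreeGroup α) :
    #(successors (cancelling x) x) ≤ 1 := by
  rw [card_successors, card_le_one]
  intro i hi j hj
  exact congrArg Prod.fst (eq_of_mem_startsWith (mem_cancelling.1 hi) (mem_cancelling.1 hj))

theorem of_mul_mem_startsWith {x : FreeGroup α} {i : α} (hi : i ∉ cancelling x) :
    of i * x ∈ startsWith (i, true) :=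
  startsWith_mk_mul (w := (i, true)) x (mt mem_cancelling.2 hi)

theorem cancelling_of_mul {x : FreeGroup α} {i : α} (hi : i ∉ cancelling x) :
    cancelling (of i * x) = ∅ := by
  refine eq_empty_of_forall_notMem fun j hj => ?_
  simpa using eq_of_mem_startsWith (of_mul_mem_startsWith hi) (mem_cancelling.1 hj)

theorem encard_setOf_mem_successors_compl_cancelling_le_one (y : FreeGroup α) :
    {x | y ∈ successors (cancelling x)ᶜ x}.encard ≤ 1 := by
  refine Set.encard_le_one_iff.2 fun x x' hx hx' => ?_
  obtain ⟨i, hi, rfl⟩ := mem_successors.1 hx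
  obtain ⟨j, hj, hji⟩ := mem_successors.1 hx'
  have hstart := of_mul_mem_startsWith (mem_compl.1 hj)
  rw [hji] at hstart
  obtain rfl : i = j :=
    congrArg Prod.fst (eq_of_mem_startsWith (of_mul_mem_startsWith (mem_compl.1 hi)) hstart)
  exact (mul_left_cancel hji).symm

/-- The part of the adjacency operator on the edges `x → gᵢx` that cancel a letter. -/
noncomputable def shrinkingAdjacency (α : Type*) [DecidableEq α] [Fintype α] :
    ℓ²(FreeGroup α, ℂ) →L[ℂ] ℓ²(FreeGroup α, ℂ) :=
  digraphAdjacency (m := 1) (n := Fintype.card α) (fun x => successors (cancelling x) x)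
    card_successors_cancelling_le_one (encard_setOf_mem_successors_le cancelling)

/-- The part of the adjacency operator on the edges `x → gᵢx` that do not cancel a letter. -/
noncomputable def growingAdjacency (α : Type*) [DecidableEq α] [Fintype α] :
    ℓ²(FreeGroup α, ℂ) →L[ℂ] ℓ²(FreeGroup α, ℂ) :=
  digraphAdjacency (m := Fintype.card α) (n := 1) (fun x => successors (cancelling x)ᶜ x)
    (fun _ => (card_successors _ _).trans_le (card_le_univ _))
    (by exact_mod_cast encard_setOf_mem_successors_compl_cancelling_le_one)

/-- The adjacency operator `(T f)(x) = ∑ᵢ f(gᵢx)` of the directed Cayley tree of the free group,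
built from its bounded parts `C` and `D`. -/
noncomputable def generatorAdjacency (α : Type*) [DecidableEq α] [Fintype α] :
    ℓ²(FreeGroup α, ℂ) →L[ℂ] ℓ²(FreeGroup α, ℂ) :=
  shrinkingAdjacency α + growingAdjacency α

theorem norm_shrinkingAdjacency_le : ‖shrinkingAdjacency α‖ ≤ √(Fintype.card α) := by
  refine (norm_digraphAdjacency_le _ _).trans_eq ?_
  simp

theorem norm_growingAdjacency_le : ‖growingAdjacency α‖ ≤ √(Fintype.card α) := by
  refine (norm_digraphAdjacency_le _ _).trans_eq ?_
  simp

theorem shrinkingAdjacency_apply (f : ℓ²(FreeGroup α, ℂ)) (x : FreeGroup α) :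
    shrinkingAdjacency α f x = ∑ i ∈ cancelling x, f (of i * x) :=
  (digraphAdjacency_apply _ _ f x).trans (sum_map _ _ _)

theorem growingAdjacency_apply (f : ℓ²(FreeGroup α, ℂ)) (x : FreeGroup α) :
    growingAdjacency α f x = ∑ i ∈ (cancelling x)ᶜ, f (of i * x) :=
  (digraphAdjacency_apply _ _ f x).trans (sum_map _ _ _)

theorem generatorAdjacency_apply (f : ℓ²(FreeGroup α, ℂ)) (x : FreeGroup α) :
    generatorAdjacency α f x = ∑ i, f (of i * x) := by
  rw [← sum_add_sum_compl (cancelling x), ← shrinkingAdjacency_apply, ← growingAdjacency_apply]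
  rfl

theorem growingAdjacency_mul_shrinkingAdjacency :
    growingAdjacency α * shrinkingAdjacency α = 0 := by
  ext f x
  rw [mul_apply_eq_comp, growingAdjacency_apply]
  refine sum_eq_zero fun i hi => ?_
  rw [shrinkingAdjacency_apply, cancelling_of_mul (mem_compl.1 hi), sum_empty]

theorem spectrum_generatorAdjacency_subset :
    spectrum ℂ (generatorAdjacency α) ⊆ Metric.closedBall 0 √(Fintype.card α) := by
  intro z hz
  rw [mem_closedBall_zero_iff]
  rcases eq_or_ne z 0 with rfl | hz0
  · simp
  rcases spectrum_add_diff_zero_subset_union growingAdjacency_mul_shrinkingAdjacency ⟨hz, hz0⟩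
    with hC | hD
  · exact (norm_le_of_mem_spectrum_continuousLinearMap hC).trans norm_shrinkingAdjacency_le
  · exact (norm_le_of_mem_spectrum_continuousLinearMap hD).trans norm_growingAdjacency_le

end Adjacency

section GreenFunction

variable {α : Type*} [Fintype α] {z : ℂ}

/-- The formal action of `z - T` on all functions, square-summable or not. -/
def shiftedAdjacency (z : ℂ) (f : FreeGroup α → ℂ) (x : FreeGroup α) : ℂ :=
  z * f x - ∑ j, f (of j * x)

variable [DecidableEq α]

theorem shiftedAdjacency_indicator_branch (f : FreeGroup α → ℂ) (i : α) :
    shiftedAdjacency z ((branch i).indicator f) =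
      (branch i).indicator (shiftedAdjacency z f) + Pi.single (of i)⁻¹ (f 1) := by
  ext x
  have hsum : ∑ j, (branch i).indicator f (of j * x) =
      (branch i).indicator (fun y => ∑ j, f (of j * y)) x - if x = (of i)⁻¹ then f 1 else 0 := by
    simp only [indicator_branch_of_mul, sum_sub_distrib, ite_and, sum_ite_eq', mem_univ, if_true]
    by_cases hx : x ∈ branch i <;> simp [hx]
  rw [shiftedAdjacency, hsum, Pi.add_apply, Pi.single_apply]
  by_cases hx : x ∈ branch i
  · simp only [hx, Set.indicator_of_mem, shiftedAdjacency]
    ring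
  · simp [hx]

theorem algebraMap_sub_generatorAdjacency_apply (f : ℓ²(FreeGroup α, ℂ)) :
    ⇑((algebraMap ℂ (ℓ²(FreeGroup α, ℂ) →L[ℂ] ℓ²(FreeGroup α, ℂ)) z - generatorAdjacency α) f) =
      shiftedAdjacency z f := by
  ext x
  rw [shiftedAdjacency, ← generatorAdjacency_apply]
  rfl

/-- The Green function `(z - T)⁻¹ δ₁` of the adjacency operator. It is `0`, by the convention for
`Ring.inverse`, when `z` lies in the spectrum. -/
noncomputable def greenFunction (α : Type*) [DecidableEq α] [Fintype α] (z : ℂ) :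
    ℓ²(FreeGroup α, ℂ) :=
  resolvent (generatorAdjacency α) z (lp.single 2 1 1)

theorem shiftedAdjacency_greenFunction (hz : z ∉ spectrum ℂ (generatorAdjacency α)) :
    shiftedAdjacency z (greenFunction α z) = Pi.single 1 1 := by
  rw [← algebraMap_sub_generatorAdjacency_apply, greenFunction, resolvent, ← mul_apply_eq_comp,
    Ring.mul_inverse_cancel _ (spectrum.notMem_iff.1 hz)]
  rfl

theorem shiftedAdjacency_greenFunction_mul (hz : z ∉ spectrum ℂ (generatorAdjacency α))
    (g : FreeGroup α) :
    shiftedAdjacency z (fun x => greenFunction α z (x * g)) = Pi.single g⁻¹ 1 := by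
  ext x
  have hgreen := congrFun (shiftedAdjacency_greenFunction hz) (x * g)
  simpa only [shiftedAdjacency, ← mul_assoc, Pi.single_apply, eq_inv_iff_mul_eq_one] using hgreen

theorem memℓp_greenFunction_mul (g : FreeGroup α) :
    Memℓp (fun x => greenFunction α z (x * g)) 2 :=
  memℓp_comp_injective (by norm_num) (lp.memℓp _) (mul_left_injective g)

theorem eq_mul_greenFunction_mul (hz : z ∉ spectrum ℂ (generatorAdjacency α))
    {v : FreeGroup α → ℂ} (hv : Memℓp v 2) {c : ℂ} {g : FreeGroup α}
    (hsource : shiftedAdjacency z v = Pi.single g⁻¹ c) (x : FreeGroup α) :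
    v x = c * greenFunction α z (x * g) := by
  let v₂ : ℓ²(FreeGroup α, ℂ) := ⟨v, hv⟩
  let translate : ℓ²(FreeGroup α, ℂ) :=
    ⟨fun y => greenFunction α z (y * g), memℓp_greenFunction_mul g⟩
  suffices v₂ = c • translate from congrArg (fun w : ℓ²(FreeGroup α, ℂ) => w x) this
  refine (ContinuousLinearMap.isUnit_iff_bijective.1 (spectrum.notMem_iff.1 hz)).injective
    (lp.ext ?_)
  rw [map_smul, lp.coeFn_smul, algebraMap_sub_generatorAdjacency_apply,
    algebraMap_sub_generatorAdjacency_apply, hsource, shiftedAdjacency_greenFunction_mul hz,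
    ← Pi.single_smul, smul_eq_mul, mul_one]

theorem indicator_branch_greenFunction (hz : z ∉ spectrum ℂ (generatorAdjacency α)) (i : α)
    (x : FreeGroup α) :
    (branch i).indicator (greenFunction α z) x =
      greenFunction α z 1 * greenFunction α z (x * of i) := by
  refine eq_mul_greenFunction_mul hz (memℓp_indicator (lp.memℓp _) _) ?_ x
  have hindicator : (branch i).indicator (Pi.single 1 1 : FreeGroup α → ℂ) = 0 := by
    simp [one_notMem_branch]
  rw [shiftedAdjacency_indicator_branch, shiftedAdjacency_greenFunction hz, hindicator, zero_add]

theorem indicator_branch_greenFunction_mul (hz : z ∉ spectrum ℂ (generatorAdjacency α)) (i : α)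
    (x : FreeGroup α) :
    (branch i).indicator (fun y => greenFunction α z (y * of i)) x =
      (1 + greenFunction α z (of i)) * greenFunction α z (x * of i) := by
  refine eq_mul_greenFunction_mul hz (memℓp_indicator (memℓp_greenFunction_mul _) _) ?_ x
  have hindicator : (branch i).indicator (Pi.single (of i)⁻¹ 1 : FreeGroup α → ℂ) =
      Pi.single (of i)⁻¹ 1 := by
    simp [of_inv_mem_branch]
  rw [shiftedAdjacency_indicator_branch, shiftedAdjacency_greenFunction_mul hz, hindicator,
    one_mul, Pi.single_add]

theorem greenFunction_one_mul_greenFunction_of (hz : z ∉ spectrum ℂ (generatorAdjacency α))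
    (i : α) : greenFunction α z 1 * greenFunction α z (of i) = 0 := by
  simpa [one_notMem_branch] using (indicator_branch_greenFunction hz i 1).symm

theorem greenFunction_of_eq_zero_or_neg_one (hz : z ∉ spectrum ℂ (generatorAdjacency α)) (i : α) :
    greenFunction α z (of i) = 0 ∨ greenFunction α z (of i) = -1 := by
  have hmul : (1 + greenFunction α z (of i)) * greenFunction α z (of i) = 0 := by
    simpa only [one_mul, Set.indicator_of_notMem (one_notMem_branch i)] using
      (indicator_branch_greenFunction_mul hz i 1).symm
  exact (mul_eq_zero.1 hmul).symm.imp_right fun h => (neg_eq_of_add_eq_zero_right h).symm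

theorem greenFunction_freeGroupCongr (hz : z ∉ spectrum ℂ (generatorAdjacency α))
    (σ : Equiv.Perm α) (x : FreeGroup α) :
    greenFunction α z (freeGroupCongr σ x) = greenFunction α z x := by
  have hmem : Memℓp (fun y => greenFunction α z (freeGroupCongr σ y)) 2 :=
    memℓp_comp_injective (by norm_num) (lp.memℓp _) (freeGroupCongr σ).injective
  refine (eq_mul_greenFunction_mul hz hmem (c := 1) (g := 1) ?_ x).trans (by simp)
  ext y
  have hgreen := congrFun (shiftedAdjacency_greenFunction hz) (freeGroupCongr σ y)
  rw [shiftedAdjacency, ← Equiv.sum_comp σ, Pi.single_apply] at hgreen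
  simp only [EmbeddingLike.map_eq_one_iff] at hgreen
  simpa [shiftedAdjacency, Pi.single_apply] using hgreen

theorem greenFunction_of_eq_of (hz : z ∉ spectrum ℂ (generatorAdjacency α)) (i j : α) :
    greenFunction α z (of j) = greenFunction α z (of i) := by
  simpa using greenFunction_freeGroupCongr hz (Equiv.swap i j) (of i)

theorem mul_greenFunction_one [Nontrivial α] (hz : z ∉ spectrum ℂ (generatorAdjacency α)) :
    z * greenFunction α z 1 = 1 := by
  obtain ⟨i⟩ : Nonempty α := inferInstance
  have hone : z * greenFunction α z 1 - Fintype.card α * greenFunction α z (of i) = 1 := by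
    simpa [shiftedAdjacency, greenFunction_of_eq_of hz i] using
      congrFun (shiftedAdjacency_greenFunction hz) 1
  rcases greenFunction_of_eq_zero_or_neg_one hz i with hi | hi
  · simpa [hi] using hone
  · have hzero : greenFunction α z 1 = 0 := by
      simpa [hi] using greenFunction_one_mul_greenFunction_of hz i
    have hcard : Fintype.card α = 1 := by simpa [hi, hzero] using hone
    exact absurd hcard Fintype.one_lt_card.ne'

theorem norm_sq_one_add_sum_norm_sq_indicator_branch_le {E : Type*} [NormedAddCommGroup E]
    (f : FreeGroup α → E) (x : FreeGroup α) :
    (if x = 1 then ‖f 1‖ ^ 2 else 0) + ∑ i, ‖(branch i).indicator f x‖ ^ 2 ≤ ‖f x‖ ^ 2 := by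
  by_cases hx : ∃ i, x ∈ branch i
  · obtain ⟨i, hi⟩ := hx
    have hx1 : x ≠ 1 := fun h => one_notMem_branch i (h ▸ hi)
    have hother (j : α) (hji : j ≠ i) : x ∉ branch j :=
      (disjoint_branch hji).notMem_of_mem_right hi
    rw [if_neg hx1, zero_add, Fintype.sum_eq_single i fun j hji => by simp [hother j hji],
      Set.indicator_of_mem hi]
  · push Not at hx
    simp only [Set.indicator_of_notMem (hx _)]
    split_ifs with hx1 <;> simp [hx1]

theorem norm_sq_greenFunction_one_add_le (hz : z ∉ spectrum ℂ (generatorAdjacency α)) :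
    ‖greenFunction α z 1‖ ^ 2 +
        Fintype.card α * (‖greenFunction α z 1‖ ^ 2 * ‖greenFunction α z‖ ^ 2) ≤
      ‖greenFunction α z‖ ^ 2 := by
  have hnorm := lp_two_hasSum_norm_sq (greenFunction α z)
  have hbranch (i : α) : HasSum (fun x => ‖(branch i).indicator (greenFunction α z) x‖ ^ 2)
      (‖greenFunction α z 1‖ ^ 2 * ‖greenFunction α z‖ ^ 2) := by
    simp only [indicator_branch_greenFunction hz, norm_mul, mul_pow]
    exact ((Equiv.mulRight (of i)).hasSum_iff.2 hnorm).mul_left _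
  have htotal := (hasSum_ite_eq (1 : FreeGroup α) (‖greenFunction α z 1‖ ^ 2)).add
    (hasSum_sum fun i (_ : i ∈ univ) => hbranch i)
  rw [sum_const, card_univ, nsmul_eq_mul] at htotal
  exact hasSum_le (norm_sq_one_add_sum_norm_sq_indicator_branch_le _) htotal hnorm

theorem card_lt_norm_sq_of_notMem_spectrum [Nontrivial α]
    (hz : z ∉ spectrum ℂ (generatorAdjacency α)) : (Fintype.card α : ℝ) < ‖z‖ ^ 2 := by
  have hone : ‖z‖ ^ 2 * ‖greenFunction α z 1‖ ^ 2 = 1 := by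
    rw [← mul_pow, ← norm_mul, mul_greenFunction_one hz, NormOneClass.norm_one, one_pow]
  have hpos : 0 < ‖greenFunction α z 1‖ ^ 2 :=
    pow_pos (norm_pos_iff.2 (right_ne_zero_of_mul_eq_one (mul_greenFunction_one hz))) 2
  have hle := norm_sq_greenFunction_one_add_le hz
  have hlt : Fintype.card α * ‖greenFunction α z 1‖ ^ 2 < 1 := by
    by_contra! hge
    nlinarith [mul_le_mul_of_nonneg_right hge (sq_nonneg ‖greenFunction α z‖)]
  rw [← hone] at hlt
  exact lt_of_mul_lt_mul_right hlt hpos.le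

theorem closedBall_subset_spectrum_generatorAdjacency [Nontrivial α] :
    Metric.closedBall 0 √(Fintype.card α) ⊆ spectrum ℂ (generatorAdjacency α) := by
  intro z hz
  rw [mem_closedBall_zero_iff] at hz
  by_contra hspectrum
  have hlt := Real.sqrt_lt_sqrt (Nat.cast_nonneg _) (card_lt_norm_sq_of_notMem_spectrum hspectrum)
  rw [Real.sqrt_sq (norm_nonneg z)] at hlt
  exact hz.not_gt hlt

theorem spectrum_generatorAdjacency [Nontrivial α] :
    spectrum ℂ (generatorAdjacency α) = Metric.closedBall 0 √(Fintype.card α) :=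
  spectrum_generatorAdjacency_subset.antisymm closedBall_subset_spectrum_generatorAdjacency

end GreenFunction

/-- **de la Harpe**: the operator `(Tf)(x) = ∑ᵢ f(gᵢx)` on `ℓ²(F_k)`, where `g₁, …, g_k`
are the free generators of the free group `F_k` (`k ≥ 2`), has spectrum equal to the
closed disk `{z ∈ ℂ : |z| ≤ √k}`. -/
theorem de_la_harpe_spectrum (k : ℕ) (hk : 2 ≤ k) :
    ∃ T : lp (fun _ : FreeGroup (Fin k) => ℂ) 2 →L[ℂ] lp (fun _ : FreeGroup (Fin k) => ℂ) 2,
      (∀ (f : lp (fun _ : FreeGroup (Fin k) => ℂ) 2) (x : FreeGroup (Fin k)),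
        (T f : ∀ _ : FreeGroup (Fin k), ℂ) x
          = ∑ i : Fin k, (f : ∀ _ : FreeGroup (Fin k), ℂ) (FreeGroup.of i * x)) ∧
      spectrum ℂ T = Metric.closedBall (0 : ℂ) (Real.sqrt k) := by
  have : Nontrivial (Fin k) := Fin.nontrivial_iff_two_le.2 hk
  refine ⟨generatorAdjacency (Fin k), generatorAdjacency_apply, ?_⟩
  rw [spectrum_generatorAdjacency, Fintype.card_fin]
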